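/- Let 0 < p < q < +∞ and 1/r = 1/p − 1/q. Let μ and ν be non-negative Borel measures on I = (a,b) ⊆ ℝ, let w ∈ B⁺(I), and let u ∈ B⁺(I) satisfy ‖u‖_{q,(a,t],ν} < ∞ for all t ∈ I and u ≠ 0 ν-a.e. on (a,b). Then there exists a constant c > 0 such that ‖gw‖_{p,(a,b),μ} ≤ c ‖u(x) ‖g‖_{∞,(x,b),μ}‖_{q,(a,b),ν} for all g ∈ B⁺(I) if and only if A₂ := ( ∫_{(a,b)} ‖w‖_{p,(a,x],μ}^r d( −‖u‖_{q,(a,x],ν}^{−r} ) )^{1/r} + ‖w‖_{p,(a,b),μ} · ‖u‖_{q,(a,b),ν}^{−1} < ∞, where the integral is the Lebesgue–Stieltjes integral with respect to the non-decreasing right-continuous function x ↦ −‖u‖_{q,(a,x],ν}^{−r}. Moreover, the best possible constant c satisfies c ≈ A₂, with equivalence constants depending only on p and q. -/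

import Mathlib

/-!
Write `P, Q, R` for the real values of `p, q, r`, and set `V = w^P dμ`, `m = u^Q dν` (both on
`(a,b)`), `U(x) = m(a,x]`, `U(y-) = m(a,y)`. With `s = Q/P`, `s' = R/P`, `k = R/Q` one has
`1/s + 1/s' = 1`, `k + 1 = s'`, `k s = s'`, and the measure `l` of the statement is `d(-U^(-k))`.
After raising to the power `P`, with `F = g^P` and `Φ(x) = (ess sup over (x,b) of g)^Q`, the
inequality compares `∫ F dV` with `(∫ Φ dm)^(1/s)`, and the two terms of `A₂` become
`(∫ V(a,x]^s' dl)^(1/s')` and `V(a,b) m(a,b)^(-1/s)`.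

Three facts carry both directions.
* Bounds for `l`: `l(x,b) ≤ U(x)^(-k)` (`measure_Ioi_le`) and
  `U(y-)^(-k) ≤ l[y,b) + U(b)^(-k)` (`inv_rpow_measure_Iio_le`).
* Median inequality: splitting a finite measure `n` into two halves of equal mass gives
  `n(ℝ)^(k+1) ≤ 2^(k+1) ∫ n(-∞,x]^k dn`, atoms being allowed. Hence, if `z ≤ Φ` on `(a,y)`, then
  `z U(y-)^(k+1) ≤ N(y)`, where `N(y) = 2^(k+1) ∫_{(a,y)} Φ U^k dm` (`rpow_mul_le_lintegral_Iio`).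
* Tonelli and the first bound for `l` give `∫ N dl ≤ 2^(k+1) ∫ Φ dm` (`lintegral_Iio_rpow_le`).

Sufficiency. By the median inequality, `F(y) U(y-)^k ≤ N(y)^(1/s)`, so
`F(y) ≤ N(y)^(1/s) (l[y,b) + U(b)^(-k))`. For the first summand, Tonelli and the monotonicity of
`N` give `∫ N(y)^(1/s) l[y,b) dV(y) ≤ ∫ V(a,t] N(t)^(1/s) dl(t)`, and Hölder in `dl` concludes;
for the second, `N ≤ 2^(k+1) U(b)^k ∫ Φ dm`. Finiteness of `A₂` makes `V(a,y]` finite for `y < b`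
and makes `{U(y-) = 0}` a `V`-null set, which is what these manipulations require.

Necessity. Testing with `F = 1` bounds the second term of `A₂`. For the first, test with
`F(y) = ∫_{[y,b)} V^k dl` and `K(x) = ∫_{(x,b)} V^k dl`, localized to `(α,β]` with `U(α) > 0`, so
that everything is finite. Then `∫ F dV` is the localized integral `∫ V^s' dl`, and the median
inequality for the measure `V^k dl`, Tonelli, Hölder and the facts above show
`(∫ K^s dm)^(1/s) ≤ A₀ (∫ V^s' dl)^(1/s)` with `A₀` depending on `p, q` only. The tested inequality
then reads `∫ V^s' dl ≤ c A₀ (∫ V^s' dl)^(1/s)`; absorb and let `(α,β]` exhaust the interval. On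
`{U(x-) = 0}` testing with the indicator of `(a,x]` gives `V(a,x] = 0`.
-/

open MeasureTheory Set ENNReal

noncomputable section

/-- The `μ`-essential supremum of `f` over `E`:
`‖f‖_{∞,E,μ} = sup {α : μ({y ∈ E : f y ≥ α}) > 0}`. -/
def eSup (μ : Measure ℝ) (E : Set ℝ) (f : ℝ → ℝ≥0∞) : ℝ≥0∞ :=
  sSup {α : ℝ≥0∞ | 0 < μ {y | y ∈ E ∧ α ≤ f y}}

/-- `‖f‖_{p,E,μ}` for `0 < p ≤ ∞`. -/
def Nrm (p : ℝ≥0∞) (μ : Measure ℝ) (E : Set ℝ) (f : ℝ → ℝ≥0∞) : ℝ≥0∞ :=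
  if p = ⊤ then eSup μ E f
  else (∫⁻ x in E, f x ^ p.toReal ∂μ) ^ (1 / p.toReal)

/-- `‖u(x) ‖g‖_{∞,(x,b),μ}‖_{q,(a,b),ν}`. -/
def RHSsup (q : ℝ≥0∞) (a b : ℝ) (μ ν : Measure ℝ) (u g : ℝ → ℝ≥0∞) : ℝ≥0∞ :=
  Nrm q ν (Ioo a b) (fun x => u x * eSup μ (Ioo x b) g)

/-- The best constant in the inequality
`‖gw‖_{p,(a,b),μ} ≤ c ‖u(x) ‖g‖_{∞,(x,b),μ}‖_{q,(a,b),ν}` over all `g ∈ B⁺((a,b))`. -/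
def bestC (p q : ℝ≥0∞) (a b : ℝ) (μ ν : Measure ℝ) (w u : ℝ → ℝ≥0∞) : ℝ≥0∞ :=
  sInf {c : ℝ≥0∞ | ∀ g : ℝ → ℝ≥0∞, Measurable g →
    Nrm p μ (Ioo a b) (fun t => g t * w t) ≤ c * RHSsup q a b μ ν u g}

/-! ### Monotone exhaustion and the median inequality -/

/-- A bound on the half-lines `(-∞, x]`, `x ∈ D`, passes to the lower set `D`, which is a countable
increasing union of such half-lines. No finiteness of `m` is needed. -/
lemma measure_le_of_isLowerSet (m : Measure ℝ) {D : Set ℝ} (hD : IsLowerSet D) {B : ℝ≥0∞}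
    (h : ∀ x ∈ D, m (Iic x) ≤ B) : m D ≤ B := by
  set t : Set ℝ := D ∩ (range ((↑) : ℚ → ℝ) ∪ {sSup D}) with ht
  have htc : t.Countable :=
    ((countable_range _).union (countable_singleton _)).mono inter_subset_right
  have hsub : D ⊆ ⋃ x ∈ t, Iic x := by
    intro x hx
    by_cases hmax : ∃ y ∈ D, x < y
    · obtain ⟨y, hy, hxy⟩ := hmax
      obtain ⟨z, hz1, hz2⟩ := exists_rat_btwn hxy
      exact mem_biUnion (show (z : ℝ) ∈ t from ⟨hD hz2.le hy, Or.inl ⟨z, rfl⟩⟩) hz1.le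
    · push Not at hmax
      have hg : IsGreatest D x := ⟨hx, fun y hy => hmax y hy⟩
      exact mem_biUnion (show x ∈ t from ⟨hx, Or.inr hg.csSup_eq.symm⟩) (mem_Iic.2 le_rfl)
  calc m D ≤ m (⋃ x ∈ t, Iic x) := measure_mono hsub
    _ = ⨆ x ∈ t, m (Iic x) := by
        refine measure_biUnion_eq_iSup htc ?_
        intro x hx y hy
        rcases le_total x y with hxy | hxy
        · exact ⟨y, hy, Iic_subset_Iic.2 hxy, subset_rfl⟩
        · exact ⟨x, hx, subset_rfl, Iic_subset_Iic.2 hxy⟩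
    _ ≤ B := iSup₂_le fun x hx => h x hx.1

lemma measure_le_of_isUpperSet (m : Measure ℝ) {D : Set ℝ} (hD : IsUpperSet D) {B : ℝ≥0∞}
    (h : ∀ x ∈ D, m (Ici x) ≤ B) : m D ≤ B := by
  have key := measure_le_of_isLowerSet (m.map (MeasurableEquiv.neg ℝ)) (D := Neg.neg ⁻¹' D) (B := B)
    (fun x y hxy hx => hD (neg_le_neg hxy) hx) (fun x hx => by
      rw [MeasurableEquiv.map_apply]
      refine le_trans (measure_mono ?_) (h (-x) hx)
      intro y hy
      simp at hy ⊢
      linarith)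
  rw [MeasurableEquiv.map_apply] at key
  convert key using 2
  ext x; simp

/-- Median inequality: if `{h < M/2}` carries at most half of the total mass `M` of `m`, then the
other half contributes at least `(M/2)^(k+1)` to `∫ h^k dm`. -/
lemma rpow_measure_univ_le (m : Measure ℝ) (hm : m univ < ⊤) {k : ℝ} (hk : 0 < k)
    {h : ℝ → ℝ≥0∞} (hh : Measurable h) (hle : m {x | h x < m univ / 2} ≤ m univ / 2) :
    m univ ^ (k + 1) ≤ 2 ^ (k + 1) * ∫⁻ x, h x ^ k ∂m := by
  set M := m univ with hM
  have h1 : M / 2 ≤ m {x | M / 2 ≤ h x} := by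
    have : M / 2 + M / 2 ≤ M / 2 + m {x | M / 2 ≤ h x} := by
      rw [ENNReal.add_halves]
      calc M = m ({x | h x < M / 2} ∪ {x | M / 2 ≤ h x}) := by
            rw [hM]; congr 1; ext x; simp [lt_or_ge]
        _ ≤ _ := (measure_union_le _ _).trans (add_le_add_left hle _)
    exact (ENNReal.add_le_add_iff_left (ENNReal.div_lt_top hm.ne (by simp)).ne).1 this
  have h2 : (M / 2) ^ k * m {x | (M / 2) ^ k ≤ h x ^ k} ≤ ∫⁻ x, h x ^ k ∂m :=
    mul_meas_ge_le_lintegral (hh.pow_const k) _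
  have h3 : {x | (M / 2) ^ k ≤ h x ^ k} = {x | M / 2 ≤ h x} := by
    ext x; simp [ENNReal.rpow_le_rpow_iff hk]
  rw [h3] at h2
  calc M ^ (k + 1) = 2 ^ (k + 1) * (M / 2) ^ (k + 1) := by
        rw [← ENNReal.mul_rpow_of_nonneg _ _ (by positivity), ENNReal.mul_div_cancel (by simp) (by simp)]
    _ = 2 ^ (k + 1) * ((M / 2) ^ k * (M / 2)) := by
        rw [ENNReal.rpow_add_of_nonneg (x := M / 2) _ _ hk.le zero_le_one, ENNReal.rpow_one]
    _ ≤ _ := by gcongr; exact (mul_le_mul_right h1 _).trans h2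

/-- The median inequality for the distribution function `x ↦ m(-∞, x]`. -/
lemma rpow_measure_univ_le_Iic (m : Measure ℝ) (hm : m univ < ⊤) {k : ℝ} (hk : 0 < k) :
    m univ ^ (k + 1) ≤ 2 ^ (k + 1) * ∫⁻ x, m (Iic x) ^ k ∂m := by
  have hmono : Monotone fun x => m (Iic x) := fun x y hxy => measure_mono (Iic_subset_Iic.2 hxy)
  exact rpow_measure_univ_le m hm hk hmono.measurable
    (measure_le_of_isLowerSet m (fun x y hxy hx => lt_of_le_of_lt (hmono hxy) hx)
      fun x hx => le_of_lt hx)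

lemma rpow_measure_univ_le_Ici (m : Measure ℝ) (hm : m univ < ⊤) {k : ℝ} (hk : 0 < k) :
    m univ ^ (k + 1) ≤ 2 ^ (k + 1) * ∫⁻ x, m (Ici x) ^ k ∂m := by
  have hmono : Antitone fun x => m (Ici x) := fun x y hxy => measure_mono (Ici_subset_Ici.2 hxy)
  exact rpow_measure_univ_le m hm hk hmono.measurable
    (measure_le_of_isUpperSet m (fun x y hxy hx => lt_of_le_of_lt (hmono hxy) hx)
      fun x hx => le_of_lt hx)

/-- Tonelli for a planar region `S`, with an integrand depending on one variable only. -/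
lemma lintegral_section_swap (μ ν : Measure ℝ) [SFinite μ] [SFinite ν] {S : Set (ℝ × ℝ)}
    (hS : MeasurableSet S) {f : ℝ → ℝ≥0∞} (hf : Measurable f) :
    ∫⁻ t, (∫⁻ x in {x | (t, x) ∈ S}, f x ∂μ) ∂ν = ∫⁻ x, f x * ν {t | (t, x) ∈ S} ∂μ := by
  have h1 : ∀ t, ∫⁻ x in {x | (t, x) ∈ S}, f x ∂μ
      = ∫⁻ x, S.indicator (fun z => f z.2) (t, x) ∂μ := by
    intro t
    have hm : MeasurableSet {x | (t, x) ∈ S} := measurable_prodMk_left hS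
    rw [← lintegral_indicator hm]
    rfl
  have h2 : ∀ x, ∫⁻ t, S.indicator (fun z => f z.2) (t, x) ∂ν = f x * ν {t | (t, x) ∈ S} := by
    intro x
    have hm : MeasurableSet {t | (t, x) ∈ S} := measurable_prodMk_right hS
    rw [← setLIntegral_const, ← lintegral_indicator hm]
    rfl
  simp_rw [h1]
  rw [lintegral_lintegral_swap]
  · simp_rw [h2]
  · exact ((hf.comp measurable_snd).indicator hS).aemeasurable

/-- Tonelli needs s-finiteness, which local finiteness away from `b` provides. -/
lemma sFinite_of_Iic {b : ℝ} (m : Measure ℝ) (h : ∀ x < b, m (Iic x) < ⊤) (hb : m (Ici b) = 0) :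
    SFinite m := by
  obtain ⟨x, -, hx, hlim⟩ := exists_seq_strictMono_tendsto b
  have : SigmaFinite m := by
    refine ⟨⟨⟨fun n => Iic (x n) ∪ Ici b, fun n => trivial, fun n => ?_, ?_⟩⟩⟩
    · refine (measure_union_le _ _).trans_lt ?_
      rw [hb, add_zero]
      exact h _ (hx n)
    · refine eq_univ_of_forall fun y => ?_
      rcases lt_or_ge y b with hy | hy
      · obtain ⟨n, hn⟩ := (hlim.eventually (lt_mem_nhds hy)).exists
        exact mem_iUnion.2 ⟨n, Or.inl hn.le⟩
      · exact mem_iUnion.2 ⟨0, Or.inr hy⟩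
  infer_instance

lemma exists_Iic_pos (m : Measure ℝ) {y : ℝ} (hy : m (Iio y) ≠ 0) : ∃ x < y, m (Iic x) ≠ 0 := by
  by_contra! hcon
  exact hy (le_zero_iff.1 (measure_le_of_isLowerSet m (isLowerSet_Iio y) fun x hx => (hcon x hx).le))

/-- The median inequality on `(a, y)`, weighted by a function `Φ` that is at least `z` there. -/
lemma rpow_mul_le_lintegral_Iio (m : Measure ℝ) {k : ℝ} (hk : 0 < k) {a y : ℝ} (ha : m (Iic a) = 0)
    (hy : m (Iio y) < ⊤) {z : ℝ≥0∞} {Φ : ℝ → ℝ≥0∞} (hz : ∀ x, a < x → x < y → z ≤ Φ x) :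
    z * m (Iio y) ^ (k + 1) ≤ 2 ^ (k + 1) * ∫⁻ x in Iio y, Φ x * m (Iic x) ^ k ∂m := by
  have hmono : Monotone fun x => m (Iic x) := fun x y hxy => measure_mono (Iic_subset_Iic.2 hxy)
  have h1 := rpow_measure_univ_le_Iic (m.restrict (Iio y)) (by simpa using hy) hk
  rw [Measure.restrict_apply_univ] at h1
  calc z * m (Iio y) ^ (k + 1)
      ≤ z * (2 ^ (k + 1) * ∫⁻ x in Iio y, m (Iic x) ^ k ∂m) := by
        refine mul_le_mul_right (h1.trans ?_) _
        gcongr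
        exact Measure.restrict_le_self
    _ = 2 ^ (k + 1) * ∫⁻ x in Iio y, z * m (Iic x) ^ k ∂m := by
        rw [lintegral_const_mul _ (hmono.measurable.pow_const k)]; ring
    _ ≤ _ := by
        refine mul_le_mul_right ?_ _
        refine lintegral_mono_ae ?_
        have h2 : ∀ᵐ x ∂m.restrict (Iio y), x ∉ Iic a :=
          ae_restrict_of_ae (measure_eq_zero_iff_ae_notMem.1 ha)
        filter_upwards [h2, ae_restrict_mem measurableSet_Iio] with x hx1 hx2
        gcongr
        exact hz x (by simpa using hx1) hx2

/-! ### The Lebesgue–Stieltjes measure of `-U^(-k)` -/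

/-- The upper bound `l(x, b) ≤ U(x)^(-k)` for the Stieltjes measure `l` of `-U^(-k)`, where
`U(x) = m(a, x]`. -/
lemma measure_Ioi_le (m l : Measure ℝ) {a b k : ℝ} (hk : 0 < k) (ha : m (Iic a) = 0)
    (hlb : l (Ici b) = 0)
    (hl : ∀ x y, a < x → x ≤ y → y < b →
      l (Ioc x y) = (m (Iic x) ^ k)⁻¹ - (m (Iic y) ^ k)⁻¹) (x : ℝ) :
    l (Ioi x) ≤ (m (Iic x) ^ k)⁻¹ := by
  rcases le_or_gt x a with hx | hx
  · have : m (Iic x) = 0 := measure_mono_null (Iic_subset_Iic.2 hx) ha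
    simp [this, hk]
  · have h1 : l (Ioi x ∩ Iio b) ≤ (m (Iic x) ^ k)⁻¹ := by
      have := measure_le_of_isLowerSet (l.restrict (Ioi x)) (isLowerSet_Iio b)
        (B := (m (Iic x) ^ k)⁻¹) (fun y hy => ?_)
      · rwa [Measure.restrict_apply measurableSet_Iio, inter_comm] at this
      · rw [Measure.restrict_apply measurableSet_Iic, inter_comm, Ioi_inter_Iic]
        rcases le_total x y with hxy | hxy
        · rw [hl x y hx hxy hy]; exact tsub_le_self
        · simp [Ioc_eq_empty_of_le hxy]
    calc l (Ioi x) ≤ l ((Ioi x ∩ Iio b) ∪ Ici b) := by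
          refine measure_mono fun y hy => ?_
          rcases lt_or_ge y b with h | h
          · exact Or.inl ⟨hy, h⟩
          · exact Or.inr h
      _ ≤ _ := (measure_union_le _ _).trans (by rw [hlb, add_zero]; exact h1)

/-- The lower bound `U(y-)^(-k) ≤ l[y, b) + U(b)^(-k)`. It includes the atom of `l` at `y`, and it
holds when `U(y-) = 0`, in which case it says that the right-hand side is infinite. -/
lemma inv_rpow_measure_Iio_le (m l : Measure ℝ) {a b k : ℝ} (hk : 0 < k) (ha : m (Iic a) = 0)
    (hmb : m (Ici b) = 0)
    (hl : ∀ x y, a < x → x ≤ y → y < b →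
      l (Ioc x y) = (m (Iic x) ^ k)⁻¹ - (m (Iic y) ^ k)⁻¹) {y : ℝ} (hay : a < y) (hyb : y < b) :
    (m (Iio y) ^ k)⁻¹ ≤ l (Ici y) + (m univ ^ k)⁻¹ := by
  have h1 : ∀ x, a < x → x < b → (m (Iic x) ^ k)⁻¹ ≤ l (Ioi x) + (m univ ^ k)⁻¹ := by
    intro x hax hxb
    obtain ⟨z, hmono, hz, hlim⟩ := exists_seq_strictMono_tendsto' hxb
    have hU : (⋃ n, Iic (z n)) = Iio b := by
      ext t
      simp only [mem_iUnion, mem_Iic, mem_Iio]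
      constructor
      · rintro ⟨n, hn⟩; exact hn.trans_lt (hz n).2
      · intro ht
        obtain ⟨n, hn⟩ := (hlim.eventually (lt_mem_nhds ht)).exists
        exact ⟨n, hn.le⟩
    have hmu : m (Iio b) = m univ := by
      refine le_antisymm (measure_mono (subset_univ _)) ?_
      rw [← Iio_union_Ici (a := b)]
      exact (measure_union_le _ _).trans (by rw [hmb, add_zero])
    have ht := tendsto_measure_iUnion_atTop (μ := m) (s := fun n => Iic (z n))
      (fun i j hij => Iic_subset_Iic.2 (hmono.monotone hij))
    rw [hU, hmu] at ht
    have ht2 : Filter.Tendsto (fun n => l (Ioi x) + (m (Iic (z n)) ^ k)⁻¹) Filter.atTop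
        (nhds (l (Ioi x) + (m univ ^ k)⁻¹)) := by
      refine Filter.Tendsto.const_add _ ?_
      exact (continuous_inv.tendsto _).comp
        (((ENNReal.continuous_rpow_const (y := k)).tendsto _).comp ht)
    refine ge_of_tendsto' ht2 fun n => ?_
    have := hl x (z n) hax (hz n).1.le (hz n).2
    calc (m (Iic x) ^ k)⁻¹ ≤ ((m (Iic x) ^ k)⁻¹ - (m (Iic (z n)) ^ k)⁻¹) + (m (Iic (z n)) ^ k)⁻¹ :=
          le_tsub_add
      _ ≤ _ := by
          rw [← this]; gcongr; exact Ioc_subset_Ioi_self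
  have h2 : ∀ x, a < x → x < y → l (Ioo x y) ≤ (m (Iic x) ^ k)⁻¹ - (m (Iio y) ^ k)⁻¹ := by
    intro x hax hxy
    have := measure_le_of_isLowerSet (l.restrict (Ioi x)) (isLowerSet_Iio y)
        (B := (m (Iic x) ^ k)⁻¹ - (m (Iio y) ^ k)⁻¹) (fun t ht => ?_)
    · rwa [Measure.restrict_apply measurableSet_Iio, inter_comm, Ioi_inter_Iio] at this
    · rw [Measure.restrict_apply measurableSet_Iic, inter_comm, Ioi_inter_Iic]
      rcases le_total x t with hxt | hxt
      · rw [hl x t hax hxt (lt_trans ht hyb)]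
        gcongr
        exact mem_Iio.1 ht
      · simp [Ioc_eq_empty_of_le hxt]
  have h3 : ∀ x, a < x → x < y → (m (Iic x) ^ k)⁻¹ ≤
      ((m (Iic x) ^ k)⁻¹ - (m (Iio y) ^ k)⁻¹) + (l (Ici y) + (m univ ^ k)⁻¹) := by
    intro x hax hxy
    refine (h1 x hax (hxy.trans hyb)).trans ?_
    rw [← add_assoc]
    gcongr
    rw [← Ioo_union_Ici_eq_Ioi hxy]
    exact (measure_union_le _ _).trans (by gcongr; exact h2 x hax hxy)
  -- Cancelling `U(x)^(-k) - U(y-)^(-k)` in `h3` needs a point `x < y` with `U(x) > 0`.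
  by_cases hy0 : m (Iio y) = 0
  · have := h3 ((a + y) / 2) (by linarith) (by linarith)
    have h0 : m (Iic ((a + y) / 2)) = 0 :=
      measure_mono_null (Iic_subset_Iio.2 (by linarith)) hy0
    simpa [h0, hy0, hk] using this
  · obtain ⟨x, hxy, hx⟩ := exists_Iic_pos m hy0
    have hax : a < x := by
      by_contra! hxa
      exact hx (measure_mono_null (Iic_subset_Iic.2 hxa) ha)
    have hfin : (m (Iic x) ^ k)⁻¹ ≠ ⊤ := by
      simp [ENNReal.inv_eq_top, ENNReal.rpow_eq_zero_iff, hx, hk.not_gt]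
    have hle : (m (Iio y) ^ k)⁻¹ ≤ (m (Iic x) ^ k)⁻¹ := by
      gcongr
    have := h3 x hax hxy
    nth_rewrite 1 [← tsub_add_cancel_of_le hle] at this
    exact (ENNReal.add_le_add_iff_left (ENNReal.sub_ne_top hfin)).1 this

lemma measure_Ici_lt_top (m l : Measure ℝ) {k : ℝ} (hk : 0 < k)
    (hl1 : ∀ x, l (Ioi x) ≤ (m (Iic x) ^ k)⁻¹) {y : ℝ} (hy : m (Iio y) ≠ 0) : l (Ici y) < ⊤ := by
  obtain ⟨x, hxy, hx⟩ := exists_Iic_pos m hy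
  refine (measure_mono (Ici_subset_Ioi.2 hxy)).trans_lt ((hl1 x).trans_lt ?_)
  rw [ENNReal.inv_lt_top]
  exact ENNReal.rpow_pos_of_nonneg (pos_iff_ne_zero.2 hx) hk.le

/-- `∫ (∫_{(a,t)} Φ U^k dm) dl(t) ≤ ∫ Φ dm`, by Tonelli and `l(x, b) ≤ U(x)^(-k)`. -/
lemma lintegral_Iio_rpow_le (m l : Measure ℝ) [SFinite m] {k : ℝ} (hk : 0 < k)
    (hl1 : ∀ x, l (Ioi x) ≤ (m (Iic x) ^ k)⁻¹) {Φ : ℝ → ℝ≥0∞} (hΦ : Measurable Φ) :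
    ∫⁻ t, (∫⁻ x in Iio t, Φ x * m (Iic x) ^ k ∂m) ∂l ≤ ∫⁻ x, Φ x ∂m := by
  have hmono : Monotone fun x => m (Iic x) := fun x y hxy => measure_mono (Iic_subset_Iic.2 hxy)
  set N : ℝ → ℝ≥0∞ := fun t => ∫⁻ x in Iio t, Φ x * m (Iic x) ^ k ∂m with hN
  have hNmono : Monotone N := fun x y hxy => lintegral_mono_set (Iio_subset_Iio hxy)
  set P : Set ℝ := {t | m (Iio t) ≠ 0} with hP
  have hPup : IsUpperSet P := fun x y hxy hx h0 =>
    hx (measure_mono_null (Iio_subset_Iio hxy) h0)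
  have hPm : MeasurableSet P := hPup.ordConnected.measurableSet
  -- `l` need not be s-finite where `m (Iio t) = 0`, but the inner integral vanishes there; on `P` it
  -- is enough to integrate over `[y, ∞)` with `y ∈ P`, where `l` is finite.
  have hzero : ∫⁻ t in Pᶜ, N t ∂l = 0 := by
    rw [setLIntegral_congr_fun (g := fun _ => 0) hPm.compl (fun t ht => ?_)]
    · simp
    · have ht0 : m (Iio t) = 0 := by simpa [hP] using ht
      exact setLIntegral_measure_zero _ _ ht0
  rw [← lintegral_add_compl N hPm, hzero, add_zero]
  rw [← withDensity_apply _ hPm]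
  refine measure_le_of_isUpperSet _ hPup fun y hy => ?_
  rw [withDensity_apply _ measurableSet_Ici]
  have : IsFiniteMeasure (l.restrict (Ici y)) :=
    ⟨by rw [Measure.restrict_apply_univ]; exact measure_Ici_lt_top m l hk hl1 hy⟩
  have hsw := lintegral_section_swap m (l.restrict (Ici y)) (S := {z : ℝ × ℝ | z.2 < z.1})
    (measurableSet_lt measurable_snd measurable_fst) (f := fun x => Φ x * m (Iic x) ^ k)
    (hΦ.mul (hmono.measurable.pow_const k))
  calc ∫⁻ t in Ici y, N t ∂l = _ := hsw
    _ ≤ _ := by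
      refine lintegral_mono fun x => ?_
      calc Φ x * m (Iic x) ^ k * (l.restrict (Ici y)) {t | x < t}
          ≤ Φ x * m (Iic x) ^ k * (m (Iic x) ^ k)⁻¹ := by
            gcongr
            exact (Measure.restrict_apply_le _ _).trans (hl1 x)
        _ = Φ x * (m (Iic x) ^ k * (m (Iic x) ^ k)⁻¹) := by ring
        _ ≤ Φ x * 1 := by gcongr; exact ENNReal.mul_inv_le_one _
        _ = Φ x := mul_one _

/-! ### Essential suprema -/

lemma eSup_le {μ : Measure ℝ} {E : Set ℝ} {f : ℝ → ℝ≥0∞} {B : ℝ≥0∞} (h : ∀ y ∈ E, f y ≤ B) :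
    eSup μ E f ≤ B := by
  refine sSup_le fun α hα => ?_
  obtain ⟨y, hy, hαy⟩ := nonempty_of_measure_ne_zero (ne_of_gt hα)
  exact hαy.trans (h y hy)

lemma eSup_mono_set (μ : Measure ℝ) {E E' : Set ℝ} (h : E ⊆ E') (f : ℝ → ℝ≥0∞) :
    eSup μ E f ≤ eSup μ E' f :=
  sSup_le_sSup fun α hα => (show 0 < μ {y | y ∈ E ∧ α ≤ f y} from hα).trans_le
    (measure_mono fun y hy => (⟨h hy.1, hy.2⟩ : y ∈ E' ∧ α ≤ f y))

/-- The essential supremum is attained as an almost everywhere bound. -/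
lemma measure_eSup_lt (μ : Measure ℝ) (E : Set ℝ) (f : ℝ → ℝ≥0∞) :
    μ {y | y ∈ E ∧ eSup μ E f < f y} = 0 := by
  have hsub : {y | y ∈ E ∧ eSup μ E f < f y} ⊆
      ⋃ r ∈ {r : ℚ | eSup μ E f < (Real.toNNReal r : ℝ≥0∞)},
        {y | y ∈ E ∧ (Real.toNNReal r : ℝ≥0∞) ≤ f y} := by
    rintro y ⟨hy, hlt⟩
    obtain ⟨r, -, h1, h2⟩ := ENNReal.lt_iff_exists_rat_btwn.1 hlt
    exact mem_biUnion (show r ∈ {r : ℚ | eSup μ E f < (Real.toNNReal r : ℝ≥0∞)} from h1)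
      ⟨hy, h2.le⟩
  refine measure_mono_null hsub ((measure_biUnion_null_iff (to_countable _)).2 fun r hr => ?_)
  by_contra hne
  exact not_lt_of_ge (le_sSup (show (Real.toNNReal r : ℝ≥0∞) ∈
    {α : ℝ≥0∞ | 0 < μ {y | y ∈ E ∧ α ≤ f y}} from pos_iff_ne_zero.2 hne)) hr

/-- The exceptional null set can be chosen independently of `x`: rational `x` suffice. -/
lemma ae_le_eSup_Ioo (μ : Measure ℝ) (a b : ℝ) (g : ℝ → ℝ≥0∞) :
    ∀ᵐ y ∂μ.restrict (Ioo a b), ∀ x, x < y → g y ≤ eSup μ (Ioo x b) g := by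
  have h : ∀ᵐ y ∂μ, ∀ r : ℚ, ¬ (y ∈ Ioo (r : ℝ) b ∧ eSup μ (Ioo (r : ℝ) b) g < g y) := by
    rw [ae_all_iff]
    intro r
    exact measure_eq_zero_iff_ae_notMem.1 (measure_eSup_lt μ _ g)
  filter_upwards [ae_restrict_of_ae h, ae_restrict_mem measurableSet_Ioo] with y hy hyab x hxy
  obtain ⟨r, hr1, hr2⟩ := exists_rat_btwn hxy
  have := hy r
  push Not at this
  exact (this ⟨hr2, hyab.2⟩).trans (eSup_mono_set μ (Ioo_subset_Ioo_left hr1.le) g)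

/-! ### Sufficiency -/

lemma rpow_rpow_mul_inv_le {M : ℝ≥0∞} (hM : M ≠ 0) {s k : ℝ} (hs : 0 < s) (hk : 0 < k)
    (hks : k * s = k + 1) : (M ^ k) ^ (1 / s) * (M ^ k)⁻¹ ≤ (M ^ (1 / s))⁻¹ := by
  by_cases hT : M = ⊤
  · simp [hT, hk]
  · rw [← ENNReal.rpow_mul, ← ENNReal.rpow_neg, ← ENNReal.rpow_neg, ← ENNReal.rpow_add _ _ hM hT]
    refine le_of_eq ?_
    congr 1
    field_simp
    linarith

lemma measure_Iio_eq_univ (m : Measure ℝ) {b : ℝ} (hmb : m (Ici b) = 0) : m (Iio b) = m univ := by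
  refine le_antisymm (measure_mono (subset_univ _)) ?_
  rw [← Iio_union_Ici (a := b)]
  exact (measure_union_le _ _).trans (by rw [hmb, add_zero])

/-- Finiteness of the two terms of `A₂` implies the inequality, after raising to the power `p`. The
function `F` stands for `g^p` and `Φ` for the `q`-th power of the essential suprema of `g`. -/
theorem sufficiency (m V l : Measure ℝ) {a b s s' k : ℝ}
    (hss : s.HolderConjugate s') (hk : 0 < k) (hk1 : k + 1 = s') (hks : k * s = s')
    (hma : m (Iic a) = 0) (hmb : m (Ici b) = 0) (hmfin : ∀ x < b, m (Iic x) < ⊤)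
    (hVa : V (Iic a) = 0) (hVb : V (Ici b) = 0) (hlb : l (Ici b) = 0)
    (hl : ∀ x y, a < x → x ≤ y → y < b →
      l (Ioc x y) = (m (Iic x) ^ k)⁻¹ - (m (Iic y) ^ k)⁻¹)
    (hQ : ∫⁻ x, V (Iic x) ^ s' ∂l < ⊤) (hE : V univ * (m univ ^ (1 / s))⁻¹ < ⊤)
    {F Φ : ℝ → ℝ≥0∞} (hΦ : Measurable Φ)
    (hFΦ : ∀ᵐ y ∂V, ∀ x, x < y → F y ^ s ≤ Φ x) :
    ∫⁻ y, F y ∂V ≤ (2 ^ (k + 1)) ^ (1 / s) *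
      ((∫⁻ x, V (Iic x) ^ s' ∂l) ^ (1 / s') + V univ * (m univ ^ (1 / s))⁻¹) *
      (∫⁻ x, Φ x ∂m) ^ (1 / s) := by
  have hs0 : 0 < s := hss.pos
  have hs'0 : 0 < s' := hss.symm.pos
  have hl1 := measure_Ioi_le m l hk hma hlb hl
  have hl2 : ∀ {y}, a < y → y < b → (m (Iio y) ^ k)⁻¹ ≤ l (Ici y) + (m univ ^ k)⁻¹ :=
    fun h1 h2 => inv_rpow_measure_Iio_le m l hk hma hmb hl h1 h2
  have hmIio : ∀ y, y < b → m (Iio y) < ⊤ := fun y hy =>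
    (measure_mono Iio_subset_Iic_self).trans_lt (hmfin y hy)
  have hVmono : Monotone fun x => V (Iic x) := fun x y hxy => measure_mono (Iic_subset_Iic.2 hxy)
  have hmmono : Monotone fun x => m (Iic x) := fun x y hxy => measure_mono (Iic_subset_Iic.2 hxy)
  -- A Chebyshev bound: `t ↦ V(a,t]` is at least `V(a,y]` on `[y,b)`.
  have hcheb : ∀ y, V (Iic y) ^ s' * l (Ici y) < ⊤ := by
    intro y
    refine lt_of_le_of_lt ?_ hQ
    calc V (Iic y) ^ s' * l (Ici y) = ∫⁻ x in Ici y, V (Iic y) ^ s' ∂l := by simp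
      _ ≤ ∫⁻ x in Ici y, V (Iic x) ^ s' ∂l :=
        setLIntegral_mono' measurableSet_Ici fun x hx => by
          gcongr; exact hx
      _ ≤ _ := setLIntegral_le_lintegral _ _
  have hmuniv0 : m univ = 0 → V univ = 0 := by
    intro h0
    by_contra hV0
    rw [h0, ENNReal.zero_rpow_of_pos (by positivity), ENNReal.inv_zero, ENNReal.mul_top hV0] at hE
    exact lt_irrefl _ hE
  -- Finiteness of both terms forces `V` to be finite on every `(a,y]`.
  have hVfin : ∀ y < b, V (Iic y) < ⊤ := by
    intro y hyb
    rcases le_or_gt y a with hya | hya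
    · rw [measure_mono_null (Iic_subset_Iic.2 hya) hVa]; simp
    by_contra! htop
    have hVy : V (Iic y) = ⊤ := top_le_iff.1 htop
    have hly : l (Ici y) = 0 := by
      by_contra hne
      have := hcheb y
      rw [hVy, ENNReal.top_rpow_of_pos hs'0, ENNReal.top_mul hne] at this
      exact lt_irrefl _ this
    have hVu : V univ = ⊤ := top_le_iff.1 (hVy ▸ measure_mono (subset_univ _))
    have hmu : m univ = ⊤ := by
      by_contra hne
      rw [hVu, ENNReal.top_mul] at hE
      · exact lt_irrefl _ hE
      · exact ENNReal.inv_ne_zero.2 (ENNReal.rpow_ne_top_of_nonneg (by positivity) hne)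
    have := hl2 hya hyb
    rw [hly, hmu, ENNReal.top_rpow_of_pos hk, ENNReal.inv_top, add_zero, nonpos_iff_eq_zero,
      ENNReal.inv_eq_zero, ENNReal.rpow_eq_top_iff] at this
    have h3 := (hmIio y hyb).ne
    rcases this with h | h
    · exact hk.not_gt h.2
    · exact h3 h.1
  have hVsf : SFinite V := sFinite_of_Iic V hVfin hVb
  have hmsf : SFinite m := sFinite_of_Iic m hmfin hmb
  set P : Set ℝ := {t | m (Iio t) ≠ 0} with hP
  have hPup : IsUpperSet P := fun x y hxy hx h0 =>
    hx (measure_mono_null (Iio_subset_Iio hxy) h0)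
  have hPm : MeasurableSet P := hPup.ordConnected.measurableSet
  -- Where `U(y-) = 0`, either `l[y,b)` or `U(b)^(-k)` is infinite, so that `V(a,y]` has to vanish.
  have hVP : V Pᶜ = 0 := by
    refine le_zero_iff.1 (measure_le_of_isLowerSet V hPup.compl fun y hy => ?_)
    have hy0 : m (Iio y) = 0 := by simpa [hP] using hy
    refine le_zero_iff.2 ?_
    rcases le_or_gt y a with hya | hya
    · exact measure_mono_null (Iic_subset_Iic.2 hya) hVa
    rcases le_or_gt b y with hyb | hyb
    · have : m univ = 0 := by
        rw [← measure_Iio_eq_univ m hmb]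
        exact measure_mono_null (Iio_subset_Iio hyb) hy0
      exact measure_mono_null (subset_univ _) (hmuniv0 this)
    have h2 := hl2 hya hyb
    rw [hy0, ENNReal.zero_rpow_of_pos hk, ENNReal.inv_zero, top_le_iff, ENNReal.add_eq_top] at h2
    rcases h2 with h2 | h2
    · by_contra hV0
      have := hcheb y
      rw [h2, ENNReal.mul_top] at this
      · exact lt_irrefl _ this
      · rw [Ne, ENNReal.rpow_eq_zero_iff]
        rintro (h | h)
        · exact hV0 h.1
        · exact hs'0.not_gt h.2
    · have : m univ = 0 := by
        rw [ENNReal.inv_eq_top, ENNReal.rpow_eq_zero_iff] at h2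
        rcases h2 with h | h
        · exact h.1
        · exact absurd h.2 hk.not_gt
      exact measure_mono_null (subset_univ _) (hmuniv0 this)
  set X : ℝ≥0∞ := ∫⁻ x, Φ x ∂m with hX
  set C : ℝ≥0∞ := 2 ^ (k + 1) with hC
  set Q : ℝ≥0∞ := ∫⁻ x, V (Iic x) ^ s' ∂l with hQdef
  set e : ℝ≥0∞ := (m univ ^ k)⁻¹ with he
  set N : ℝ → ℝ≥0∞ := fun t => C * ∫⁻ x in Iio t, Φ x * m (Iic x) ^ k ∂m with hN
  have hNmono : Monotone N := fun x y hxy =>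
    mul_le_mul_right (lintegral_mono_set (Iio_subset_Iio hxy)) _
  have hNs : Measurable fun t => N t ^ (1 / s) := hNmono.measurable.pow_const _
  have hNl : ∫⁻ t, N t ∂l ≤ C * X := by
    have hmono2 : Monotone fun t => ∫⁻ x in Iio t, Φ x * m (Iic x) ^ k ∂m := fun x y hxy =>
      lintegral_mono_set (Iio_subset_Iio hxy)
    rw [hN, lintegral_const_mul _ hmono2.measurable]
    exact mul_le_mul_right (lintegral_Iio_rpow_le m l hk hl1 hΦ) _
  have hNM : ∀ t, N t ≤ C * (m univ ^ k * X) := by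
    intro t
    refine mul_le_mul_right ((setLIntegral_le_lintegral _ _).trans ?_) _
    rw [← lintegral_const_mul _ hΦ]
    refine lintegral_mono fun x => ?_
    rw [mul_comm]
    gcongr
    exact subset_univ _
  have hpoint : ∀ᵐ y ∂V, y ∈ P → F y ≤ N y ^ (1 / s) * (l (Ici y) + e) := by
    filter_upwards [hFΦ, measure_eq_zero_iff_ae_notMem.1 hVb, measure_eq_zero_iff_ae_notMem.1 hVa]
      with y hy hyb hya hyP
    simp only [mem_Ici, mem_Iic, not_le] at hyb hya
    have h1 := rpow_mul_le_lintegral_Iio m hk hma (hmIio y hyb) (z := F y ^ s) (Φ := Φ)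
      fun x _ hxy => hy x hxy
    set D := m (Iio y) with hD
    have hD0 : D ^ k ≠ 0 := by
      rw [Ne, ENNReal.rpow_eq_zero_iff]
      rintro (h | h)
      · exact hyP h.1
      · exact hk.not_gt h.2
    have hDT : D ^ k ≠ ⊤ := ENNReal.rpow_ne_top_of_nonneg hk.le (hmIio y hyb).ne
    have h2 : F y * D ^ k ≤ N y ^ (1 / s) := by
      rw [one_div, ENNReal.le_rpow_inv_iff hs0, ENNReal.mul_rpow_of_nonneg _ _ hs0.le,
        ← ENNReal.rpow_mul, hks, ← hk1]
      exact h1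
    calc F y = F y * D ^ k * (D ^ k)⁻¹ := by
          rw [mul_assoc, ENNReal.mul_inv_cancel hD0 hDT, mul_one]
      _ ≤ _ := mul_le_mul' h2 (hl2 hya hyb)
  have hFP : ∫⁻ y, F y ∂V = V.withDensity F P := by
    rw [withDensity_apply _ hPm, ← lintegral_add_compl F hPm, setLIntegral_measure_zero _ _ hVP,
      add_zero]
  rw [hFP]
  -- On `[y₀, ∞)` with `U(y₀-) > 0` the measure `l` is finite, so Tonelli applies there.
  refine measure_le_of_isUpperSet _ hPup fun y₀ hy₀ => ?_
  rw [withDensity_apply _ measurableSet_Ici]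
  have : IsFiniteMeasure (l.restrict (Ici y₀)) :=
    ⟨by rw [Measure.restrict_apply_univ]; exact measure_Ici_lt_top m l hk hl1 hy₀⟩
  have hM0 : m univ ≠ 0 := fun h0 => hy₀ (measure_mono_null (subset_univ _) h0)
  have hsw := lintegral_section_swap (V.restrict (Ici y₀)) (l.restrict (Ici y₀))
    (S := {z : ℝ × ℝ | z.2 ≤ z.1}) (measurableSet_le measurable_snd measurable_fst) hNs
  have hfirst : ∫⁻ y in Ici y₀, N y ^ (1 / s) * l (Ici y) ∂V ≤ Q ^ (1 / s') * (C * X) ^ (1 / s) := by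
    calc ∫⁻ y in Ici y₀, N y ^ (1 / s) * l (Ici y) ∂V
        = ∫⁻ y in Ici y₀, N y ^ (1 / s) * (l.restrict (Ici y₀)) {t | y ≤ t} ∂V := by
          refine setLIntegral_congr_fun measurableSet_Ici fun y hy => ?_
          have : {t | y ≤ t} ∩ Ici y₀ = Ici y := by
            ext t; simp only [mem_inter_iff, mem_ofPred_eq, mem_Ici]
            exact ⟨fun h => h.1, fun h => ⟨h, le_trans hy h⟩⟩
          rw [Measure.restrict_apply (measurableSet_le measurable_const measurable_id'), this]
      _ = _ := hsw.symm
      _ ≤ ∫⁻ t in Ici y₀, V (Iic t) * N t ^ (1 / s) ∂l := by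
          refine lintegral_mono fun t => ?_
          calc ∫⁻ x in Iic t, N x ^ (1 / s) ∂V.restrict (Ici y₀)
              ≤ ∫⁻ x in Iic t, N x ^ (1 / s) ∂V := lintegral_mono'
                (Measure.restrict_mono subset_rfl Measure.restrict_le_self) le_rfl
            _ ≤ ∫⁻ x in Iic t, N t ^ (1 / s) ∂V := by
                refine setLIntegral_mono' measurableSet_Iic fun x hx => ?_
                gcongr
                exact hNmono hx
            _ = V (Iic t) * N t ^ (1 / s) := by
                rw [setLIntegral_const, mul_comm]
      _ ≤ ∫⁻ t, V (Iic t) * N t ^ (1 / s) ∂l := setLIntegral_le_lintegral _ _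
      _ ≤ (∫⁻ t, V (Iic t) ^ s' ∂l) ^ (1 / s') * (∫⁻ t, (N t ^ (1 / s)) ^ s ∂l) ^ (1 / s) :=
          ENNReal.lintegral_mul_le_Lp_mul_Lq l hss.symm hVmono.measurable.aemeasurable
            hNs.aemeasurable
      _ ≤ _ := by
          gcongr
          refine le_trans (le_of_eq ?_) hNl
          congr 1; ext t
          rw [← ENNReal.rpow_mul, one_div_mul_cancel hs0.ne', ENNReal.rpow_one]
  have hsecond : ∫⁻ y in Ici y₀, N y ^ (1 / s) * e ∂V ≤
      (V univ * (m univ ^ (1 / s))⁻¹) * (C * X) ^ (1 / s) := by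
    calc ∫⁻ y in Ici y₀, N y ^ (1 / s) * e ∂V
        ≤ ∫⁻ y, (C * (m univ ^ k * X)) ^ (1 / s) * e ∂V := by
          refine (setLIntegral_le_lintegral _ _).trans (lintegral_mono fun y => ?_)
          gcongr
          exact hNM y
      _ = V univ * ((m univ ^ k) ^ (1 / s) * e) * (C * X) ^ (1 / s) := by
          rw [lintegral_const, show C * (m univ ^ k * X) = m univ ^ k * (C * X) by ring,
            ENNReal.mul_rpow_of_nonneg _ _ (by positivity)]
          ring
      _ ≤ _ := by
          gcongr
          exact rpow_rpow_mul_inv_le hM0 hs0 hk (hks.trans hk1.symm)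
  calc ∫⁻ y in Ici y₀, F y ∂V ≤ ∫⁻ y in Ici y₀, N y ^ (1 / s) * (l (Ici y) + e) ∂V := by
        refine lintegral_mono_ae ?_
        filter_upwards [ae_restrict_of_ae hpoint, ae_restrict_mem measurableSet_Ici] with y h1 h2
        exact h1 (hPup h2 hy₀)
    _ = ∫⁻ y in Ici y₀, N y ^ (1 / s) * l (Ici y) ∂V + ∫⁻ y in Ici y₀, N y ^ (1 / s) * e ∂V := by
        simp_rw [mul_add]
        exact lintegral_add_right _ (hNs.mul_const _)
    _ ≤ _ := add_le_add hfirst hsecond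
    _ = _ := by
        rw [← add_mul, ENNReal.mul_rpow_of_nonneg _ _ (by positivity)]
        ring

/-! ### Necessity -/

/-- Absorption of a finite quantity `x`: `x ≤ A x^(1/s')` implies `x^(1/s) ≤ A`. -/
lemma rpow_le_of_le_mul_rpow {x A : ℝ≥0∞} (hx : x ≠ ⊤) {s s' : ℝ} (hss : s.HolderConjugate s')
    (h : x ≤ A * x ^ (1 / s')) : x ^ (1 / s) ≤ A := by
  have hs0 : 0 < s := hss.pos
  have hs'0 : 0 < s' := hss.symm.pos
  by_cases h0 : x = 0
  · simp [h0, ENNReal.zero_rpow_of_pos (inv_pos.2 hs0)]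
  have hsum : 1 / s + 1 / s' = 1 := by simpa [one_div] using hss.inv_add_inv_eq_one
  have h1 : x = x ^ (1 / s) * x ^ (1 / s') := by
    rw [← ENNReal.rpow_add _ _ h0 hx, hsum, ENNReal.rpow_one]
  have h2 : x ^ (1 / s') ≠ 0 := by
    rw [Ne, ENNReal.rpow_eq_zero_iff]
    rintro (h | h)
    · exact h0 h.1
    · exact hx h.1
  have h3 : x ^ (1 / s') ≠ ⊤ := ENNReal.rpow_ne_top_of_nonneg (by positivity) hx
  nth_rewrite 1 [h1] at h
  exact (ENNReal.mul_le_mul_iff_left h2 h3).1 h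

/-- The inequality bounds both terms of `A₂`, after raising to the power `p`. In `H` the pair
`F, K` stands for `g^p` and a pointwise bound for the `p`-th power of its essential suprema, so
that no essential suprema occur. -/
theorem necessity (m V l : Measure ℝ) {a b s s' k : ℝ}
    (hss : s.HolderConjugate s') (hk : 0 < k) (hk1 : k + 1 = s') (hks : k * s = s')
    (hma : m (Iic a) = 0) (hmb : m (Ici b) = 0) (hmfin : ∀ x < b, m (Iic x) < ⊤)
    (hVb : V (Ici b) = 0) (hlb : l (Ici b) = 0)
    (hl : ∀ x y, a < x → x ≤ y → y < b →
      l (Ioc x y) = (m (Iic x) ^ k)⁻¹ - (m (Iic y) ^ k)⁻¹)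
    {c : ℝ≥0∞} (hc : c ≠ ⊤)
    (H : ∀ F K : ℝ → ℝ≥0∞, Measurable F → Measurable K → (∀ x y, x < y → F y ≤ K x) →
      ∫⁻ y, F y ∂V ≤ c * (∫⁻ x, K x ^ s ∂m) ^ (1 / s)) :
    (∫⁻ x, V (Iic x) ^ s' ∂l) ^ (1 / s') ≤ c * (2 ^ s * (2 ^ (k + 1)) ^ (1 / s')) ∧
      V univ * (m univ ^ (1 / s))⁻¹ ≤ c := by
  have hs1 : 1 < s := hss.lt
  have hs0 : 0 < s := hss.pos
  have hs'0 : 0 < s' := hss.symm.pos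
  have hl1 := measure_Ioi_le m l hk hma hlb hl
  have hVmono : Monotone fun x => V (Iic x) := fun x y hxy => measure_mono (Iic_subset_Iic.2 hxy)
  have hmIio : ∀ y, y < b → m (Iio y) < ⊤ := fun y hy =>
    (measure_mono Iio_subset_Iic_self).trans_lt (hmfin y hy)
  have hmmonoI : Monotone fun x => m (Iio x) := fun x y hxy => measure_mono (Iio_subset_Iio hxy)
  constructor
  swap
  · have h1 := H (fun _ => 1) (fun _ => 1) measurable_const measurable_const fun _ _ _ => le_rfl
    simp only [lintegral_const, one_mul, ENNReal.one_rpow] at h1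
    calc V univ * (m univ ^ (1 / s))⁻¹ ≤ c * m univ ^ (1 / s) * (m univ ^ (1 / s))⁻¹ := by gcongr
      _ = c * (m univ ^ (1 / s) * (m univ ^ (1 / s))⁻¹) := by ring
      _ ≤ c * 1 := by gcongr; exact ENNReal.mul_inv_le_one _
      _ = c := mul_one c
  -- Testing with the indicator of `(a,x]` shows that `V(a,x]` is finite, and zero if `U(x-) = 0`.
  have hVm : ∀ x, V (Iic x) ≤ c * m (Iio x) ^ (1 / s) := by
    intro x
    have h1 := H ((Iic x).indicator fun _ => 1) ((Iio x).indicator fun _ => 1)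
      (measurable_const.indicator measurableSet_Iic) (measurable_const.indicator measurableSet_Iio)
      (fun t y hty => by
        by_cases hy : y ≤ x
        · have : t < x := hty.trans_le hy
          simp [indicator, hy, this]
        · simp [indicator, hy])
    have h2 : ∀ t, ((Iio x).indicator (fun _ => (1 : ℝ≥0∞)) t) ^ s
        = (Iio x).indicator (fun _ => (1 : ℝ≥0∞)) t := by
      intro t
      by_cases ht : t < x <;> simp [indicator, ht, hs0]
    simp_rw [h2] at h1
    rwa [lintegral_indicator_const measurableSet_Iic, lintegral_indicator_const measurableSet_Iio,
      one_mul, one_mul] at h1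
  have hVfin : ∀ x < b, V (Iic x) < ⊤ := fun x hx => (hVm x).trans_lt
    (ENNReal.mul_lt_top hc.lt_top (ENNReal.rpow_lt_top_of_nonneg (by positivity) (hmIio x hx).ne))
  have hVsf : SFinite V := sFinite_of_Iic V hVfin hVb
  have hmsf : SFinite m := sFinite_of_Iic m hmfin hmb
  set A₀ : ℝ≥0∞ := 2 ^ s * (2 ^ (k + 1)) ^ (1 / s') with hA₀
  -- The estimate on `(α, β]`, where every quantity is finite and may be absorbed.
  have hloc : ∀ α β, m (Iic α) ≠ 0 → β < b →
      ∫⁻ x in Ioc α β, V (Iic x) ^ s' ∂l ≤ (c * A₀) ^ s' := by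
    intro α β hα hβ
    have hlα : l (Ioi α) < ⊤ := by
      refine (hl1 α).trans_lt ?_
      rw [ENNReal.inv_lt_top]
      exact ENNReal.rpow_pos_of_nonneg (pos_iff_ne_zero.2 hα) hk.le
    have hlαβ : l (Ioc α β) < ⊤ := (measure_mono Ioc_subset_Ioi_self).trans_lt hlα
    set l' := l.restrict (Ioc α β) with hl'
    have : IsFiniteMeasure l' := ⟨by rw [hl', Measure.restrict_apply_univ]; exact hlαβ⟩
    have hl'mem : ∀ᵐ t ∂l', t ∈ Ioc α β := ae_restrict_mem measurableSet_Ioc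
    set f : ℝ → ℝ≥0∞ := fun x => V (Iic x) ^ k with hf
    have hfm : Measurable f := hVmono.measurable.pow_const k
    set F : ℝ → ℝ≥0∞ := fun y => ∫⁻ x in Ici y, f x ∂l' with hF
    set K : ℝ → ℝ≥0∞ := fun y => ∫⁻ x in Ioi y, f x ∂l' with hK
    have hFm : Measurable F :=
      Antitone.measurable fun x y hxy => lintegral_mono_set (Ici_subset_Ici.2 hxy)
    have hKm : Measurable K :=
      Antitone.measurable fun x y hxy => lintegral_mono_set (Ioi_subset_Ioi hxy)
    have hFK : ∀ x y, x < y → F y ≤ K x := fun x y hxy =>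
      lintegral_mono_set (Ici_subset_Ioi.2 hxy)
    set Q : ℝ≥0∞ := ∫⁻ x, V (Iic x) ^ s' ∂l' with hQ
    set X : ℝ≥0∞ := ∫⁻ x, K x ^ s ∂m with hX
    have hVβ : ∀ p : ℝ, 0 ≤ p → V (Iic β) ^ p * l (Ioc α β) < ⊤ := fun p hp =>
      ENNReal.mul_lt_top (ENNReal.rpow_lt_top_of_nonneg hp (hVfin β hβ).ne) hlαβ
    have hbound : ∀ p : ℝ, 0 ≤ p → ∫⁻ x, V (Iic x) ^ p ∂l' ≤ V (Iic β) ^ p * l (Ioc α β) := by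
      intro p hp
      rw [← setLIntegral_const]
      refine setLIntegral_mono' measurableSet_Ioc fun x hx => ?_
      gcongr
      exact hx.2
    have hQfin : Q ≠ ⊤ := ((hbound s' hs'0.le).trans_lt (hVβ s' hs'0.le)).ne
    have hKT : ∀ x, K x ≤ V (Iic β) ^ k * l (Ioc α β) := fun x =>
      (setLIntegral_le_lintegral _ _).trans (hbound k hk.le)
    have hKfin : ∀ x, K x < ⊤ := fun x => (hKT x).trans_lt (hVβ k hk.le)
    have hK0 : ∀ x, β < x → K x = 0 := by
      intro x hx
      refine setLIntegral_measure_zero _ _ ?_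
      rw [hl', Measure.restrict_apply measurableSet_Ioi]
      convert measure_empty (μ := l)
      ext t
      simp only [mem_inter_iff, mem_Ioi, mem_Ioc, mem_empty_iff_false, iff_false]
      intro h
      linarith [h.1, h.2.2]
    have hXfin : X ≠ ⊤ := by
      refine ne_of_lt ?_
      calc X ≤ ∫⁻ x, (Iic β).indicator (fun _ => (V (Iic β) ^ k * l (Ioc α β)) ^ s) x ∂m := by
            refine lintegral_mono fun x => ?_
            by_cases hx : x ≤ β
            · rw [indicator_of_mem (mem_Iic.2 hx)]
              exact ENNReal.rpow_le_rpow (hKT x) hs0.le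
            · rw [hK0 x (not_le.1 hx), ENNReal.zero_rpow_of_pos hs0]
              exact zero_le
        _ = (V (Iic β) ^ k * l (Ioc α β)) ^ s * m (Iic β) :=
            lintegral_indicator_const measurableSet_Iic _
        _ < ⊤ := ENNReal.mul_lt_top
            (ENNReal.rpow_lt_top_of_nonneg hs0.le (hVβ k hk.le).ne) (hmfin β hβ)
    have hFV : ∫⁻ y, F y ∂V = Q := by
      have := lintegral_section_swap l' V (S := {z : ℝ × ℝ | z.1 ≤ z.2})
        (measurableSet_le measurable_fst measurable_snd) hfm
      calc ∫⁻ y, F y ∂V = _ := this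
        _ = Q := by
          refine lintegral_congr fun x => ?_
          change V (Iic x) ^ k * V (Iic x) = V (Iic x) ^ s'
          rw [← hk1, ENNReal.rpow_add_of_nonneg _ _ hk.le zero_le_one, ENNReal.rpow_one]
    -- The median inequality for the measure `f dl'` on `(x, ∞)`, with exponent `s - 1`.
    have hKs : ∀ x, K x ^ s ≤ 2 ^ s * ∫⁻ t in Ioi x, f t * F t ^ (s - 1) ∂l' := by
      intro x
      set n := (l'.restrict (Ioi x)).withDensity f with hn
      have hnu : n univ = K x := by rw [hn, withDensity_apply _ MeasurableSet.univ,
        Measure.restrict_univ]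
      have h1 := rpow_measure_univ_le_Ici n (hnu ▸ hKfin x) (k := s - 1) (by linarith)
      rw [hnu, sub_add_cancel] at h1
      refine h1.trans ?_
      have hle : ∀ t, n (Ici t) ≤ F t := by
        intro t
        rw [hn, withDensity_apply _ measurableSet_Ici]
        exact lintegral_mono' (Measure.restrict_mono subset_rfl Measure.restrict_le_self) le_rfl
      calc 2 ^ s * ∫⁻ t, n (Ici t) ^ (s - 1) ∂n ≤ 2 ^ s * ∫⁻ t, F t ^ (s - 1) ∂n := by
            refine mul_le_mul_right (lintegral_mono fun t => ?_) _
            exact ENNReal.rpow_le_rpow (hle t) (by linarith)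
        _ = _ := by
            rw [hn, lintegral_withDensity_eq_lintegral_mul _ hfm (hFm.pow_const _)]
            rfl
    have hXle : X ≤ 2 ^ s * ∫⁻ t, f t * (F t ^ (s - 1) * m (Iio t)) ∂l' := by
      have hmeas : Measurable fun t => f t * F t ^ (s - 1) := hfm.mul (hFm.pow_const _)
      have hsw := lintegral_section_swap l' m (S := {z : ℝ × ℝ | z.1 < z.2})
        (measurableSet_lt measurable_fst measurable_snd) hmeas
      have hmono : Antitone fun x => ∫⁻ t in Ioi x, f t * F t ^ (s - 1) ∂l' := fun x y hxy =>
        lintegral_mono_set (Ioi_subset_Ioi hxy)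
      calc X ≤ ∫⁻ x, 2 ^ s * ∫⁻ t in Ioi x, f t * F t ^ (s - 1) ∂l' ∂m := lintegral_mono hKs
        _ = 2 ^ s * ∫⁻ x, ∫⁻ t in Ioi x, f t * F t ^ (s - 1) ∂l' ∂m :=
            lintegral_const_mul _ hmono.measurable
        _ = 2 ^ s * ∫⁻ t, f t * F t ^ (s - 1) * m (Iio t) ∂l' := congrArg _ hsw
        _ = _ := by simp_rw [mul_assoc]
    have hhold : ∫⁻ t, f t * (F t ^ (s - 1) * m (Iio t)) ∂l' ≤
        Q ^ (1 / s) * (2 ^ (k + 1) * X) ^ (1 / s') := by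
      refine (ENNReal.lintegral_mul_le_Lp_mul_Lq l' hss hfm.aemeasurable
        ((hFm.pow_const _).mul hmmonoI.measurable).aemeasurable).trans ?_
      gcongr
      · refine le_of_eq (lintegral_congr fun x => ?_)
        rw [hf, ← ENNReal.rpow_mul, hks]
      · calc ∫⁻ t, (F t ^ (s - 1) * m (Iio t)) ^ s' ∂l'
            ≤ ∫⁻ t, 2 ^ (k + 1) * ∫⁻ x in Iio t, K x ^ s * m (Iic x) ^ k ∂m ∂l' := by
              refine lintegral_mono_ae ?_
              filter_upwards [hl'mem] with t ht
              rw [ENNReal.mul_rpow_of_nonneg _ _ hs'0.le, ← ENNReal.rpow_mul,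
                hss.sub_one_mul_conj, ← hk1]
              exact rpow_mul_le_lintegral_Iio m hk hma (hmIio t (ht.2.trans_lt hβ))
                fun x _ hxt => ENNReal.rpow_le_rpow (hFK x t hxt) hs0.le
          _ ≤ ∫⁻ t, 2 ^ (k + 1) * ∫⁻ x in Iio t, K x ^ s * m (Iic x) ^ k ∂m ∂l :=
              lintegral_mono' Measure.restrict_le_self le_rfl
          _ = 2 ^ (k + 1) * ∫⁻ t, ∫⁻ x in Iio t, K x ^ s * m (Iic x) ^ k ∂m ∂l := by
              have hmono : Monotone fun t => ∫⁻ x in Iio t, K x ^ s * m (Iic x) ^ k ∂m :=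
                fun x y hxy => lintegral_mono_set (Iio_subset_Iio hxy)
              exact lintegral_const_mul _ hmono.measurable
          _ ≤ _ := by
              gcongr
              exact lintegral_Iio_rpow_le m l hk hl1 (hKm.pow_const s)
    have hXQ : X ^ (1 / s) ≤ A₀ * Q ^ (1 / s) := by
      refine rpow_le_of_le_mul_rpow hXfin hss ((hXle.trans (mul_le_mul_right hhold _)).trans ?_)
      rw [ENNReal.mul_rpow_of_nonneg _ _ (by positivity)]
      refine le_of_eq ?_
      rw [hA₀]; ring
    have hQle : Q ≤ c * A₀ * Q ^ (1 / s) := by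
      calc Q = ∫⁻ y, F y ∂V := hFV.symm
        _ ≤ c * X ^ (1 / s) := H F K hFm hKm hFK
        _ ≤ c * (A₀ * Q ^ (1 / s)) := by gcongr
        _ = _ := by ring
    have h5 := rpow_le_of_le_mul_rpow hQfin hss.symm hQle
    rwa [one_div, ENNReal.rpow_inv_le_iff hs'0] at h5
  rw [one_div, ENNReal.rpow_inv_le_iff hs'0]
  -- Exhaustion: discard `{U(t-) = 0}`, then let `α` decrease and `β` increase to `b`.
  set P : Set ℝ := {t | m (Iio t) ≠ 0} with hP
  have hPup : IsUpperSet P := fun x y hxy hx h0 =>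
    hx (measure_mono_null (Iio_subset_Iio hxy) h0)
  have hPm : MeasurableSet P := hPup.ordConnected.measurableSet
  have hzero : ∫⁻ t in Pᶜ, V (Iic t) ^ s' ∂l = 0 := by
    rw [setLIntegral_congr_fun (g := fun _ => 0) hPm.compl (fun t ht => ?_)]
    · simp
    · have ht0 : m (Iio t) = 0 := by simpa [hP] using ht
      have h1 := hVm t
      rw [ht0, ENNReal.zero_rpow_of_pos (by positivity), mul_zero] at h1
      simp only
      rw [le_zero_iff.1 h1, ENNReal.zero_rpow_of_pos hs'0]
  rw [← lintegral_add_compl _ hPm, hzero, add_zero, ← withDensity_apply _ hPm]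
  refine measure_le_of_isUpperSet _ hPup fun y hy => ?_
  obtain ⟨α, hαy, hα⟩ := exists_Iic_pos m hy
  set W := l.withDensity fun t => V (Iic t) ^ s' with hW
  have hWb : W (Ici b) = 0 := withDensity_absolutelyContinuous _ _ hlb
  have hWb' : (W.restrict (Ioi α)) (Ici b) = 0 :=
    le_zero_iff.1 ((Measure.restrict_apply_le _ _).trans hWb.le)
  calc W (Ici y) ≤ W (Ioi α) := measure_mono (Ici_subset_Ioi.2 hαy)
    _ = (W.restrict (Ioi α)) (Iio b) := by
        rw [measure_Iio_eq_univ _ hWb', Measure.restrict_apply_univ]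
    _ ≤ _ := measure_le_of_isLowerSet _ (isLowerSet_Iio b) fun β hβ => by
        rw [Measure.restrict_apply measurableSet_Iic, inter_comm, Ioi_inter_Iic, hW,
          withDensity_apply _ measurableSet_Ioc]
        exact hloc α β hα hβ

/-! ### Translation to the norms -/

lemma Nrm_of_ne_top {p : ℝ≥0∞} (hp : p ≠ ⊤) (μ : Measure ℝ) (E : Set ℝ) (f : ℝ → ℝ≥0∞) :
    Nrm p μ E f = (∫⁻ x in E, f x ^ p.toReal ∂μ) ^ (1 / p.toReal) := by
  simp [Nrm, hp]

/-- The measure `w^p dμ` on the interval `(a,b)`. -/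
def powMeasure (P : ℝ) (μ : Measure ℝ) (a b : ℝ) (w : ℝ → ℝ≥0∞) : Measure ℝ :=
  (μ.restrict (Ioo a b)).withDensity fun x => w x ^ P

lemma Nrm_Ioc_eq {p : ℝ≥0∞} (hp : p ≠ ⊤) (μ : Measure ℝ) {a b x : ℝ} (hx : x < b)
    (w : ℝ → ℝ≥0∞) :
    Nrm p μ (Ioc a x) w = powMeasure p.toReal μ a b w (Iic x) ^ (1 / p.toReal) := by
  rw [Nrm_of_ne_top hp, powMeasure, withDensity_apply _ measurableSet_Iic,
    Measure.restrict_restrict measurableSet_Iic]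
  congr 4
  ext t
  simp only [mem_Ioc, mem_inter_iff, mem_Iic, mem_Ioo]
  exact ⟨fun h => ⟨h.2, h.1, h.2.trans_lt hx⟩, fun h => ⟨h.2.1, h.1⟩⟩

lemma Nrm_Ioo_eq {p : ℝ≥0∞} (hp : p ≠ ⊤) (μ : Measure ℝ) (a b : ℝ) (w : ℝ → ℝ≥0∞) :
    Nrm p μ (Ioo a b) w = powMeasure p.toReal μ a b w univ ^ (1 / p.toReal) := by
  rw [Nrm_of_ne_top hp, powMeasure, withDensity_apply _ MeasurableSet.univ, Measure.restrict_univ]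

lemma powMeasure_Iic (P : ℝ) (μ : Measure ℝ) (a b : ℝ) (w : ℝ → ℝ≥0∞) :
    powMeasure P μ a b w (Iic a) = 0 := by
  refine withDensity_absolutelyContinuous _ _ ?_
  rw [Measure.restrict_apply measurableSet_Iic]
  convert measure_empty (μ := μ)
  ext t
  simp only [mem_inter_iff, mem_Iic, mem_Ioo, mem_empty_iff_false, iff_false]
  intro h
  linarith [h.1, h.2.1]

lemma powMeasure_Ici (P : ℝ) (μ : Measure ℝ) (a b : ℝ) (w : ℝ → ℝ≥0∞) :
    powMeasure P μ a b w (Ici b) = 0 := by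
  refine withDensity_absolutelyContinuous _ _ ?_
  rw [Measure.restrict_apply measurableSet_Ici]
  convert measure_empty (μ := μ)
  ext t
  simp only [mem_inter_iff, mem_Ici, mem_Ioo, mem_empty_iff_false, iff_false]
  intro h
  linarith [h.1, h.2.2]

lemma lintegral_powMeasure (P : ℝ) (μ : Measure ℝ) (a b : ℝ) {w f : ℝ → ℝ≥0∞} (hw : Measurable w)
    (hf : Measurable f) :
    ∫⁻ x, f x ∂powMeasure P μ a b w = ∫⁻ x in Ioo a b, w x ^ P * f x ∂μ := by
  rw [powMeasure, lintegral_withDensity_eq_lintegral_mul _ (hw.pow_const _) hf]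
  rfl

lemma add_rpow_le {x y : ℝ≥0∞} {t : ℝ} (ht : 0 ≤ t) :
    (x + y) ^ t ≤ 2 ^ t * (x ^ t + y ^ t) := by
  calc (x + y) ^ t ≤ (2 * max x y) ^ t := by
        refine ENNReal.rpow_le_rpow ?_ ht
        rw [two_mul]
        exact add_le_add (le_max_left _ _) (le_max_right _ _)
    _ = 2 ^ t * (max x y) ^ t := ENNReal.mul_rpow_of_nonneg _ _ ht
    _ ≤ _ := by
        gcongr
        rcases le_total x y with h | h
        · rw [max_eq_right h]; exact le_add_self
        · rw [max_eq_left h]; exact le_self_add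

/-- Theorem 3.5 (ii): for `0 < p < q < ∞` and `1/r = 1/p - 1/q`, the inequality
`‖gw‖_{p,(a,b),μ} ≤ c ‖u(x) ‖g‖_{∞,(x,b),μ}‖_{q,(a,b),ν}` holds for all `g ∈ B⁺((a,b))`
iff `A₂ = (∫_{(a,b)} ‖w‖_{p,(a,x],μ}^r d(-‖u‖_{q,(a,x],ν}^{-r}))^{1/r}
+ ‖w‖_{p,(a,b),μ} ‖u‖_{q,(a,b),ν}⁻¹ < ∞`, where the Lebesgue–Stieltjes measure `lam`
of the non-decreasing right-continuous function `x ↦ -‖u‖_{q,(a,x],ν}^{-r}` is determined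
by `lam((α,β]) = ‖u‖_{q,(a,α],ν}^{-r} - ‖u‖_{q,(a,β],ν}^{-r}`.  Moreover, the best
constant satisfies `c ≈ A₂` with constants depending only on `p` and `q`. -/
theorem statement1 (p q r : ℝ≥0∞) (hp : 0 < p) (hpq : p < q) (hq : q < ⊤)
    (hr : r⁻¹ = p⁻¹ - q⁻¹) :
    ∃ C₁ C₂ : ℝ≥0∞, 0 < C₁ ∧ C₂ < ⊤ ∧
      ∀ (a b : ℝ), a < b →
      ∀ (μ ν : Measure ℝ) (w u : ℝ → ℝ≥0∞),
        Measurable w → Measurable u →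
        (∀ t ∈ Ioo a b, Nrm q ν (Ioc a t) u < ⊤) →
        (∀ᵐ x ∂ν.restrict (Ioo a b), u x ≠ 0) →
        ∀ lam : Measure ℝ,
        (∀ α β : ℝ, a < α → α ≤ β → β < b →
            lam (Ioc α β) =
              (Nrm q ν (Ioc a α) u ^ r.toReal)⁻¹ - (Nrm q ν (Ioc a β) u ^ r.toReal)⁻¹) →
        ((∃ c : ℝ≥0∞, 0 < c ∧ c < ⊤ ∧ ∀ g : ℝ → ℝ≥0∞, Measurable g →
            Nrm p μ (Ioo a b) (fun t => g t * w t) ≤ c * RHSsup q a b μ ν u g) ↔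
          (∫⁻ x in Ioo a b, Nrm p μ (Ioc a x) w ^ r.toReal ∂lam) ^ (1 / r.toReal) +
            Nrm p μ (Ioo a b) w * (Nrm q ν (Ioo a b) u)⁻¹ < ⊤) ∧
        C₁ * ((∫⁻ x in Ioo a b, Nrm p μ (Ioc a x) w ^ r.toReal ∂lam) ^ (1 / r.toReal) +
            Nrm p μ (Ioo a b) w * (Nrm q ν (Ioo a b) u)⁻¹) ≤
          bestC p q a b μ ν w u ∧
        bestC p q a b μ ν w u ≤
          C₂ * ((∫⁻ x in Ioo a b, Nrm p μ (Ioc a x) w ^ r.toReal ∂lam) ^ (1 / r.toReal) +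
            Nrm p μ (Ioo a b) w * (Nrm q ν (Ioo a b) u)⁻¹) := by
  have hpT : p ≠ ⊤ := (hpq.trans hq).ne
  have hqT : q ≠ ⊤ := hq.ne
  have hq0 : 0 < q := hp.trans hpq
  have hP : 0 < p.toReal := ENNReal.toReal_pos hp.ne' hpT
  have hPQ : p.toReal < q.toReal := (ENNReal.toReal_lt_toReal hpT hqT).2 hpq
  have hQ : 0 < q.toReal := hP.trans hPQ
  have hR' : r.toReal⁻¹ = p.toReal⁻¹ - q.toReal⁻¹ := by
    rw [← ENNReal.toReal_inv, hr, ENNReal.toReal_sub_of_le (ENNReal.inv_le_inv.2 hpq.le)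
      (ENNReal.inv_ne_top.2 hp.ne'), ENNReal.toReal_inv, ENNReal.toReal_inv]
  have hR : 0 < r.toReal := by
    rw [← inv_pos, hR', sub_pos]
    exact inv_strictAnti₀ hP hPQ
  set P := p.toReal with hPdef
  set Q := q.toReal with hQdef
  set R := r.toReal with hRdef
  -- `obtain` rather than `set`: rewriting must not unfold the exponents.
  obtain ⟨s, hs⟩ : ∃ s, s = Q / P := ⟨_, rfl⟩
  obtain ⟨s', hs'⟩ : ∃ s', s' = R / P := ⟨_, rfl⟩
  obtain ⟨k, hkdef⟩ : ∃ k, k = R / Q := ⟨_, rfl⟩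
  have hk : 0 < k := hkdef ▸ div_pos hR hQ
  have hs1 : 1 < s := by rw [hs, one_lt_div hP]; exact hPQ
  have hs0 : 0 < s := by linarith
  have hs'0 : 0 < s' := hs' ▸ div_pos hR hP
  have hrel : R * Q = Q * P + R * P := by
    field_simp at hR'
    linarith
  have hk1 : k + 1 = s' := by
    rw [hkdef, hs']; field_simp; linarith
  have hks : k * s = s' := by
    rw [hkdef, hs', hs]; field_simp
  have hss : s.HolderConjugate s' := by
    rw [Real.holderConjugate_iff]
    refine ⟨hs1, ?_⟩
    rw [hs, hs']; field_simp; linarith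
  set A₀ : ℝ≥0∞ := 2 ^ s * (2 ^ (k + 1)) ^ (1 / s') with hA₀
  have hA₀T : A₀ ≠ ⊤ := ENNReal.mul_ne_top
    (ENNReal.rpow_ne_top_of_nonneg hs0.le (by simp))
    (ENNReal.rpow_ne_top_of_nonneg (by positivity)
      (ENNReal.rpow_ne_top_of_nonneg (by positivity) (by simp)))
  set D₁ : ℝ≥0∞ := (2 ^ (k + 1)) ^ (1 / s) with hD₁
  have hC1T : A₀ ^ (1 / P) + 1 ≠ ⊤ :=
    ENNReal.add_ne_top.2 ⟨ENNReal.rpow_ne_top_of_nonneg (by positivity) hA₀T, by simp⟩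
  have hC10 : A₀ ^ (1 / P) + 1 ≠ 0 := by simp
  have hC2T : D₁ ^ (1 / P) * 2 ^ (1 / P) < ⊤ := ENNReal.mul_lt_top
    (ENNReal.rpow_lt_top_of_nonneg (by positivity) (ENNReal.rpow_ne_top_of_nonneg (by positivity)
      (ENNReal.rpow_ne_top_of_nonneg (by positivity) (by simp))))
    (ENNReal.rpow_lt_top_of_nonneg (by positivity) (by simp))
  have hC20 : D₁ ^ (1 / P) * 2 ^ (1 / P) ≠ 0 := by
    have h2 : ∀ t : ℝ, (2 : ℝ≥0∞) ^ t ≠ 0 := fun t =>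
      (ENNReal.rpow_pos (by simp) (by simp)).ne'
    refine mul_ne_zero ?_ (h2 _)
    rw [hD₁, ← ENNReal.rpow_mul, ← ENNReal.rpow_mul]
    exact h2 _
  refine ⟨(A₀ ^ (1 / P) + 1)⁻¹, D₁ ^ (1 / P) * 2 ^ (1 / P), ENNReal.inv_pos.2 hC1T, hC2T, ?_⟩
  intro a b hab μ ν w u hw hu hufin _ lam hlam
  set V := powMeasure P μ a b w with hV
  set m := powMeasure Q ν a b u with hm
  set l := lam.restrict (Ioo a b) with hldef
  have hma : m (Iic a) = 0 := powMeasure_Iic ..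
  have hmb : m (Ici b) = 0 := powMeasure_Ici ..
  have hVa : V (Iic a) = 0 := powMeasure_Iic ..
  have hVb : V (Ici b) = 0 := powMeasure_Ici ..
  have hlb : l (Ici b) = 0 := by
    rw [hldef, Measure.restrict_apply measurableSet_Ici]
    convert measure_empty (μ := lam)
    ext t
    simp only [mem_inter_iff, mem_Ici, mem_Ioo, mem_empty_iff_false, iff_false]
    intro h
    linarith [h.1, h.2.2]
  have hNu : ∀ x < b, Nrm q ν (Ioc a x) u = m (Iic x) ^ (1 / Q) := fun x hx =>
    Nrm_Ioc_eq hqT ν hx u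
  have hNw : ∀ x < b, Nrm p μ (Ioc a x) w = V (Iic x) ^ (1 / P) := fun x hx =>
    Nrm_Ioc_eq hpT μ hx w
  have hmfin : ∀ x < b, m (Iic x) < ⊤ := by
    intro x hx
    rcases le_or_gt x a with hxa | hxa
    · rw [measure_mono_null (Iic_subset_Iic.2 hxa) hma]; simp
    · have := hufin x ⟨hxa, hx⟩
      rw [hNu x hx] at this
      by_contra! h
      rw [top_le_iff.1 h, ENNReal.top_rpow_of_pos (by positivity)] at this
      exact lt_irrefl _ this
  have hl : ∀ x y, a < x → x ≤ y → y < b →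
      l (Ioc x y) = (m (Iic x) ^ k)⁻¹ - (m (Iic y) ^ k)⁻¹ := by
    intro x y hax hxy hyb
    have h1 := hlam x y hax hxy hyb
    have hsub : Ioc x y ∩ Ioo a b = Ioc x y :=
      inter_eq_left.2 fun t ht => ⟨hax.trans ht.1, ht.2.trans_lt hyb⟩
    rw [hNu x (hxy.trans_lt hyb), hNu y hyb, ← ENNReal.rpow_mul, ← ENNReal.rpow_mul,
      show 1 / Q * R = k by rw [hkdef]; ring] at h1
    rw [hldef, Measure.restrict_apply measurableSet_Ioc, hsub, h1]
  have hint : ∫⁻ x in Ioo a b, Nrm p μ (Ioc a x) w ^ R ∂lam = ∫⁻ x, V (Iic x) ^ s' ∂l := by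
    refine setLIntegral_congr_fun measurableSet_Ioo fun x hx => ?_
    rw [hNw x hx.2, ← ENNReal.rpow_mul, show 1 / P * R = s' by rw [hs']; ring]
  rw [hint, Nrm_Ioo_eq hpT, Nrm_Ioo_eq hqT]
  change _ ∧ _ * (_ + V univ ^ (1 / P) * (m univ ^ (1 / Q))⁻¹) ≤ _ ∧ _
  set I := ∫⁻ x, V (Iic x) ^ s' ∂l with hI
  set E := V univ * (m univ ^ (1 / s))⁻¹ with hE
  have hPinv : 0 ≤ 1 / P := by positivity
  have hIpow : (I ^ (1 / s')) ^ (1 / P) = I ^ (1 / R) := by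
    rw [← ENNReal.rpow_mul, hs']
    congr 1
    field_simp
  have hEpow : E ^ (1 / P) = V univ ^ (1 / P) * (m univ ^ (1 / Q))⁻¹ := by
    rw [hE, ENNReal.mul_rpow_of_nonneg _ _ hPinv, ENNReal.inv_rpow, ← ENNReal.rpow_mul,
      show 1 / s * (1 / P) = 1 / Q by rw [hs]; field_simp]
  change ((∃ c : ℝ≥0∞, _) ↔ I ^ (1 / R) + V univ ^ (1 / P) * (m univ ^ (1 / Q))⁻¹ < ⊤) ∧ _ ∧
    _ ≤ _ * (I ^ (1 / R) + V univ ^ (1 / P) * (m univ ^ (1 / Q))⁻¹)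
  rw [← hEpow]
  set A₂ := I ^ (1 / R) + E ^ (1 / P) with hA₂
  have hlhs : ∀ g : ℝ → ℝ≥0∞, Measurable g →
      Nrm p μ (Ioo a b) (fun t => g t * w t) = (∫⁻ y, g y ^ P ∂V) ^ (1 / P) := by
    intro g hg
    rw [Nrm_of_ne_top hpT, hV, lintegral_powMeasure _ _ _ _ hw (hg.pow_const _)]
    congr 1
    refine lintegral_congr fun x => ?_
    rw [ENNReal.mul_rpow_of_nonneg _ _ hP.le, mul_comm]
  have hGm : ∀ g : ℝ → ℝ≥0∞, Measurable fun x => eSup μ (Ioo x b) g := fun g =>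
    Antitone.measurable fun x y hxy => eSup_mono_set μ (Ioo_subset_Ioo_left hxy) g
  have hrhs : ∀ g : ℝ → ℝ≥0∞,
      RHSsup q a b μ ν u g = (∫⁻ x, eSup μ (Ioo x b) g ^ Q ∂m) ^ (1 / Q) := by
    intro g
    rw [RHSsup, Nrm_of_ne_top hqT, hm, lintegral_powMeasure _ _ _ _ hu ((hGm g).pow_const _)]
    congr 1
    refine lintegral_congr fun x => ?_
    rw [ENNReal.mul_rpow_of_nonneg _ _ hQ.le]
  have hsuff : A₂ < ⊤ → ∀ g : ℝ → ℝ≥0∞, Measurable g →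
      Nrm p μ (Ioo a b) (fun t => g t * w t) ≤
        (D₁ ^ (1 / P) * 2 ^ (1 / P) * A₂) * RHSsup q a b μ ν u g := by
    intro hA g hg
    obtain ⟨hA1, hA2⟩ := ENNReal.add_lt_top.1 hA
    have hIfin : I < ⊤ := by
      by_contra! h
      rw [top_le_iff.1 h, ENNReal.top_rpow_of_pos (by positivity)] at hA1
      exact lt_irrefl _ hA1
    have hEfin : E < ⊤ := by
      by_contra! h
      rw [top_le_iff.1 h, ENNReal.top_rpow_of_pos (by positivity)] at hA2
      exact lt_irrefl _ hA2
    have hae : ∀ᵐ y ∂V, ∀ x, x < y → (g y ^ P) ^ s ≤ eSup μ (Ioo x b) g ^ Q := by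
      filter_upwards [(withDensity_absolutelyContinuous _ _).ae_le (ae_le_eSup_Ioo μ a b g)]
        with y hy x hxy
      rw [← ENNReal.rpow_mul, show P * s = Q by rw [hs]; field_simp]
      exact ENNReal.rpow_le_rpow (hy x hxy) hQ.le
    have key := sufficiency m V l hss hk hk1 hks hma hmb hmfin hVa hVb hlb hl hIfin hEfin
      ((hGm g).pow_const Q) hae
    rw [hlhs g hg, hrhs g]
    calc (∫⁻ y, g y ^ P ∂V) ^ (1 / P)
        ≤ (D₁ * (I ^ (1 / s') + E) * (∫⁻ x, eSup μ (Ioo x b) g ^ Q ∂m) ^ (1 / s)) ^ (1 / P) :=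
          ENNReal.rpow_le_rpow key hPinv
      _ = D₁ ^ (1 / P) * (I ^ (1 / s') + E) ^ (1 / P) *
          (∫⁻ x, eSup μ (Ioo x b) g ^ Q ∂m) ^ (1 / Q) := by
          rw [ENNReal.mul_rpow_of_nonneg _ _ hPinv, ENNReal.mul_rpow_of_nonneg _ _ hPinv,
            ← ENNReal.rpow_mul (∫⁻ x, eSup μ (Ioo x b) g ^ Q ∂m) (1 / s),
            show 1 / s * (1 / P) = 1 / Q by rw [hs]; field_simp]
      _ ≤ D₁ ^ (1 / P) * (2 ^ (1 / P) * ((I ^ (1 / s')) ^ (1 / P) + E ^ (1 / P))) *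
          (∫⁻ x, eSup μ (Ioo x b) g ^ Q ∂m) ^ (1 / Q) := by
          gcongr
          exact add_rpow_le hPinv
      _ = _ := by rw [hIpow, hA₂]; ring
  have hnec : ∀ c : ℝ≥0∞, (∀ g : ℝ → ℝ≥0∞, Measurable g →
      Nrm p μ (Ioo a b) (fun t => g t * w t) ≤ c * RHSsup q a b μ ν u g) →
      (A₀ ^ (1 / P) + 1)⁻¹ * A₂ ≤ c := by
    intro c hc
    by_cases hcT : c = ⊤
    · rw [hcT]; exact le_top
    -- The inequality for `g = F^(1/P)`, with the essential suprema replaced by pointwise bounds.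
    have H : ∀ F K : ℝ → ℝ≥0∞, Measurable F → Measurable K → (∀ x y, x < y → F y ≤ K x) →
        ∫⁻ y, F y ∂V ≤ c ^ P * (∫⁻ x, K x ^ s ∂m) ^ (1 / s) := by
      intro F K hF hK hFK
      have h1 := hc (fun y => F y ^ (1 / P)) (hF.pow_const _)
      rw [hlhs _ (hF.pow_const _), hrhs] at h1
      have h2 : ∀ y, (F y ^ (1 / P)) ^ P = F y := fun y => by
        rw [← ENNReal.rpow_mul, one_div_mul_cancel hP.ne', ENNReal.rpow_one]
      have h3 : ∀ x, eSup μ (Ioo x b) (fun y => F y ^ (1 / P)) ^ Q ≤ K x ^ s := by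
        intro x
        have : eSup μ (Ioo x b) (fun y => F y ^ (1 / P)) ≤ K x ^ (1 / P) :=
          eSup_le fun y hy => ENNReal.rpow_le_rpow (hFK x y hy.1) hPinv
        refine (ENNReal.rpow_le_rpow this hQ.le).trans (le_of_eq ?_)
        rw [← ENNReal.rpow_mul, show 1 / P * Q = s by rw [hs]; ring]
      simp_rw [h2] at h1
      have h4 : (∫⁻ y, F y ∂V) ^ (1 / P) ≤ c * (∫⁻ x, K x ^ s ∂m) ^ (1 / Q) :=
        h1.trans (by gcongr with x; exact h3 x)
      have h5 := ENNReal.rpow_le_rpow h4 hP.le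
      rwa [← ENNReal.rpow_mul, one_div_mul_cancel hP.ne', ENNReal.rpow_one,
        ENNReal.mul_rpow_of_nonneg _ _ hP.le, ← ENNReal.rpow_mul,
        show 1 / Q * P = 1 / s by rw [hs]; field_simp] at h5
    obtain ⟨h1, h2⟩ := necessity m V l hss hk hk1 hks hma hmb hmfin hVb hlb hl
      (ENNReal.rpow_ne_top_of_nonneg hP.le hcT) H
    have hcP : (c ^ P) ^ (1 / P) = c := by
      rw [← ENNReal.rpow_mul, mul_one_div_cancel hP.ne', ENNReal.rpow_one]
    have h1' := ENNReal.rpow_le_rpow h1 hPinv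
    have h2' := ENNReal.rpow_le_rpow h2 hPinv
    rw [hIpow, ENNReal.mul_rpow_of_nonneg _ _ hPinv, hcP] at h1'
    rw [hcP] at h2'
    calc (A₀ ^ (1 / P) + 1)⁻¹ * A₂ ≤ (A₀ ^ (1 / P) + 1)⁻¹ * (c * A₀ ^ (1 / P) + c) := by
          gcongr
          exact add_le_add h1' h2'
      _ = c * ((A₀ ^ (1 / P) + 1)⁻¹ * (A₀ ^ (1 / P) + 1)) := by ring
      _ = c := by rw [ENNReal.inv_mul_cancel hC10 hC1T, mul_one]
  refine ⟨⟨?_, fun hA => ?_⟩, ?_, ?_⟩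
  · rintro ⟨c, -, hcT, hc⟩
    by_contra! h
    have h1 := hnec c hc
    rw [top_le_iff.1 h, ENNReal.mul_top (ENNReal.inv_ne_zero.2 hC1T)] at h1
    exact not_lt_of_ge h1 hcT
  · -- The summand `1` makes the constant strictly positive even when `A₂ = 0`.
    refine ⟨D₁ ^ (1 / P) * 2 ^ (1 / P) * A₂ + 1, by simp,
      ENNReal.add_lt_top.2 ⟨ENNReal.mul_lt_top hC2T hA, by simp⟩, fun g hg => ?_⟩
    exact (hsuff hA g hg).trans (mul_le_mul_left le_self_add _)
  · exact le_sInf fun c hc => hnec c hc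
  · by_cases hA : A₂ = ⊤
    · rw [hA, ENNReal.mul_top hC20]; exact le_top
    · exact sInf_le (hsuff (lt_top_iff_ne_top.2 hA))
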